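/- arXiv:2105.02058 — 7 statements merged into one kernel-verified Lean document; each statement's English description precedes it below -/
import Mathlib

section
/- Let λ ∈ ℂ be such that P⊥(H − λ)P⊥ is invertible on Ran P⊥, with inverse R⊥(λ). Then λ belongs to the spectrum of H if and only if the restriction of F_P(H − λ) to Ran P (an operator from Ran P to Ran P) fails to be bijective; equivalently, H − λ is bijective on 𝓗 if and only if F_P(H − λ) restricted to Ran P is bijective. -/
/-!
Write `T = H - λ` and `P⊥ = 1 - P`. The hypotheses on `R` amount to `P R = R P = 0`,
`R T P⊥ = P⊥` and `P⊥ T R = P⊥`. Hence the operator `G = T - T R T` satisfies `P⊥ G = 0 = G P⊥`,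
that is, `G = P G P`: its block decomposition has only the Feshbach–Schur block.
The factorizations `G = T (1 - R T) = (1 - T R) T` then transfer injectivity and surjectivity
between `T` and `G` restricted to `Ran P`. The spectral form follows because, by the open mapping
theorem, a bounded operator on a Banach space is a unit iff it is bijective.
-/

/-- Feshbach–Schur map, isospectrality (a): for `λ` such that `P⊥(H-λ)P⊥` is invertible on
`Ran P⊥`, `λ` belongs to the spectrum of `H` iff the restriction of `F_P(H-λ)` to `Ran P`
fails to be bijective; equivalently, `H - λ` is bijective iff that restriction is bijective. -/
theorem feshbach_schur_isospectral
    {𝓗 : Type*} [NormedAddCommGroup 𝓗] [InnerProductSpace ℂ 𝓗] [CompleteSpace 𝓗]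
    (H P : 𝓗 →L[ℂ] 𝓗) (hP : P ∘L P = P)
    (Pperp : 𝓗 →L[ℂ] 𝓗) (hPperp : Pperp = 1 - P)
    (lam : ℂ) (R : 𝓗 →L[ℂ] 𝓗)
    (A : 𝓗 →L[ℂ] 𝓗) (hA : A = Pperp ∘L ((H - lam • 1) ∘L Pperp))
    (hR1 : R = Pperp ∘L (R ∘L Pperp))
    (hR2 : ∀ x ∈ Set.range ⇑Pperp, R (A x) = Pperp x)
    (hR3 : ∀ x ∈ Set.range ⇑Pperp, A (R x) = Pperp x)
    (G : 𝓗 →L[ℂ] 𝓗)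
    (hG : G = (H - lam • 1) - (H - lam • 1) ∘L (R ∘L (H - lam • 1))) :
    (lam ∈ spectrum ℂ H ↔
      ¬ Function.Bijective
        (fun x : Set.range ⇑P => (⟨P (G (P x.1)), Set.mem_range_self _⟩ : Set.range ⇑P))) ∧
    (Function.Bijective ⇑(H - lam • 1) ↔
      Function.Bijective
        (fun x : Set.range ⇑P => (⟨P (G (P x.1)), Set.mem_range_self _⟩ : Set.range ⇑P))) := by
  obtain ⟨T, hT⟩ : ∃ T : 𝓗 →L[ℂ] 𝓗, T = H - lam • 1 := ⟨_, rfl⟩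
  have hspec : lam ∈ spectrum ℂ H ↔ ¬ Function.Bijective ⇑T := by
    rw [spectrum.mem_iff, ← ContinuousLinearMap.isUnit_iff_bijective, ← IsUnit.neg_iff, neg_sub,
      Algebra.algebraMap_eq_smul_one, hT]
  rw [← hT] at hA hG ⊢
  have hPP : ∀ x, P (P x) = P x := fun x => DFunLike.congr_fun hP x
  have hQ : ∀ x, Pperp x = x - P x := fun x => by simp [hPperp]
  have hR : ∀ x, R x = Pperp (R (Pperp x)) := fun x => DFunLike.congr_fun hR1 x
  have hPQ : ∀ x, P (Pperp x) = 0 := fun x => by simp [hQ, hPP]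
  have hQP : ∀ x, Pperp (P x) = 0 := fun x => by simp [hQ, hPP]
  have hQQ : ∀ x, Pperp (Pperp x) = Pperp x := fun x => by rw [hQ (Pperp x), hPQ, sub_zero]
  have hPR : ∀ x, P (R x) = 0 := fun x => by rw [hR, hPQ]
  have hRP : ∀ x, R (P x) = 0 := fun x => by rw [hR, hQP]; simp
  have hQR : ∀ x, Pperp (R x) = R x := fun x => by rw [hQ, hPR, sub_zero]
  have hRQ : ∀ x, R (Pperp x) = R x := fun x => by rw [hQ, map_sub, hRP, sub_zero]
  have hAx : ∀ x, A x = Pperp (T (Pperp x)) := fun x => by rw [hA]; rfl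
  have hRTQ : ∀ x, R (T (Pperp x)) = Pperp x := fun x => by
    have h := hR2 (Pperp x) ⟨x, rfl⟩
    rwa [hAx, hRQ, hQQ] at h
  have hQTR : ∀ x, Pperp (T (R x)) = Pperp x := fun x => by
    have h := hR3 (Pperp x) ⟨x, rfl⟩
    rwa [hAx, hRQ, hQR, hQQ] at h
  have hGx : ∀ x, G x = T x - T (R (T x)) := fun x => by rw [hG]; rfl
  have hPG : ∀ x, P (G x) = G x := fun x => by
    have h : Pperp (G x) = 0 := by rw [hGx, map_sub, hQTR, sub_self]
    rw [hQ, sub_eq_zero] at h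
    exact h.symm
  have hGP : ∀ x, G (P x) = G x := fun x => by
    have h : G (Pperp x) = 0 := by rw [hGx, hRTQ, sub_self]
    rw [hQ, map_sub, sub_eq_zero] at h
    exact h.symm
  have key : Function.Bijective ⇑T ↔ Function.Bijective
      (fun x : Set.range ⇑P => (⟨P (G (P x.1)), Set.mem_range_self _⟩ : Set.range ⇑P)) := by
    constructor
    · rintro ⟨hinj, hsurj⟩
      constructor
      · rintro ⟨_, a, rfl⟩ ⟨_, b, rfl⟩ h
        have h1 : G (P a) = G (P b) := by simpa only [Subtype.mk.injEq, hPG, hPP] using h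
        rw [hGx, hGx, ← map_sub, ← map_sub] at h1
        -- `P` kills the range of `R`, so it recovers `x` from `(1 - R T) x` on `Ran P`.
        have h2 := congrArg P (hinj h1)
        rw [map_sub, map_sub, hPR, hPR, sub_zero, sub_zero, hPP, hPP] at h2
        exact Subtype.ext h2
      · rintro ⟨_, y, rfl⟩
        obtain ⟨u, hu⟩ := hsurj (P y)
        refine ⟨⟨P u, u, rfl⟩, Subtype.ext ?_⟩
        change P (G (P (P u))) = P y
        rw [hPG, hPP, hGP, hGx, hu, hRP, map_zero, sub_zero]
    · rintro ⟨hinj, hsurj⟩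
      constructor
      · rw [injective_iff_map_eq_zero]
        intro u hu
        have hG0 : G u = 0 := by simp [hGx, hu]
        have h0 : (⟨P u, u, rfl⟩ : Set.range ⇑P) = ⟨P 0, 0, rfl⟩ := by
          apply hinj
          apply Subtype.ext
          change P (G (P (P u))) = P (G (P (P 0)))
          rw [hPP, hGP, hG0]
          simp
        have hPu : P u = 0 := by simpa using congrArg Subtype.val h0
        have hQu : Pperp u = u := by rw [hQ, hPu, sub_zero]
        have h := hRTQ u
        rw [hQu, hu, map_zero] at h
        exact h.symm
      · intro y
        -- `(1 - T R) y` lies in `Ran P`, hence equals `G x = T (x - R T x)` for some `x`.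
        have hz : P (y - T (R y)) = y - T (R y) := by
          have h : Pperp (y - T (R y)) = 0 := by rw [map_sub, hQTR, sub_self]
          rw [hQ, sub_eq_zero] at h
          exact h.symm
        obtain ⟨⟨x, hx⟩, hxy⟩ := hsurj ⟨y - T (R y), _, hz⟩
        have h : P (G (P x)) = y - T (R y) := congrArg Subtype.val hxy
        rw [hPG, hGP, hGx] at h
        refine ⟨x - R (T x) + R y, ?_⟩
        rw [map_add, map_sub, h, sub_add_cancel]
  exact ⟨hspec.trans (not_congr key), key⟩
end

section
/- Let λ ∈ ℂ be such that P⊥(H − λ)P⊥ is invertible on Ran P⊥, with inverse R⊥(λ). If ψ ∈ 𝓗 satisfies Hψ = λψ, then F_P(H − λ)(Pψ) = 0 and ψ = Q_P(λ)(Pψ). -/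
/-!
Write `p = P ψ`, `q = P⊥ ψ` and `T = H - λ`. Since `T ψ = 0`, `T p = -T q`, and `R = R P⊥` gives
`R T p = -R (P⊥ T P⊥) q = -q`. Hence `F p = P (T p + T q) = P (T ψ) = 0`, and since `R p = 0`,
`Q p = p - R T p - λ R p = p + q = ψ`.
-/

/-- Feshbach–Schur map, Theorem 1(b,d) forward direction: if `ψ` is an eigenvector of `H`
with eigenvalue `λ`, then `F_P(H - λ) (Pψ) = 0` and `ψ = Q_P(λ) (Pψ)`. -/
theorem feshbach_schur_eigenvector_forward
    {𝓗 : Type*} [NormedAddCommGroup 𝓗] [InnerProductSpace ℂ 𝓗] [CompleteSpace 𝓗]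
    (H P : 𝓗 →L[ℂ] 𝓗) (hP : P ∘L P = P)
    (Pperp : 𝓗 →L[ℂ] 𝓗) (hPperp : Pperp = 1 - P)
    (lam : ℂ) (R : 𝓗 →L[ℂ] 𝓗)
    (A : 𝓗 →L[ℂ] 𝓗) (hA : A = Pperp ∘L ((H - lam • 1) ∘L Pperp))
    (hR1 : R = Pperp ∘L (R ∘L Pperp))
    (hR2 : ∀ x ∈ Set.range ⇑Pperp, R (A x) = Pperp x)
    (hR3 : ∀ x ∈ Set.range ⇑Pperp, A (R x) = Pperp x)
    (F Q : 𝓗 →L[ℂ] 𝓗)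
    (hF : F = P ∘L (((H - lam • 1) - (H - lam • 1) ∘L (R ∘L (H - lam • 1))) ∘L P))
    (hQ : Q = P - R ∘L (H ∘L P))
    (ψ : 𝓗) (hψ : H ψ = lam • ψ) :
    F (P ψ) = 0 ∧ ψ = Q (P ψ) := by
  have hPP : ∀ x, P (P x) = P x := fun x => DFunLike.congr_fun hP x
  have hperp : ∀ x, Pperp x = x - P x := fun x => by simp [hPperp]
  have hR1' : ∀ x, R x = Pperp (R (Pperp x)) := fun x => DFunLike.congr_fun hR1 x
  have hidem : ∀ x, Pperp (Pperp x) = Pperp x := fun x => by simp [hperp, hPP]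
  have hRperp : ∀ x, R (Pperp x) = R x := fun x => by
    rw [hR1' (Pperp x), hidem, ← hR1']
  have hRP : R (P ψ) = 0 := by
    rw [← hRperp, hperp, hPP, sub_self, map_zero]
  obtain ⟨T, hT⟩ : ∃ T : 𝓗 →L[ℂ] 𝓗, T = H - lam • 1 := ⟨_, rfl⟩
  rw [← hT] at hA hF
  have hTapp : ∀ x, T x = H x - lam • x := fun x => by simp [hT]
  have hTψ : T ψ = 0 := by rw [hTapp, hψ, sub_self]
  have hTp : T (P ψ) = -T (Pperp ψ) := by
    rw [hperp, map_sub, hTψ, zero_sub, neg_neg]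
  have hRT : R (T (P ψ)) = -Pperp ψ := by
    have h := hR2 (Pperp ψ) ⟨ψ, rfl⟩
    simp only [hA, ContinuousLinearMap.comp_apply, hidem, hRperp] at h
    rw [hTp, map_neg, h]
  constructor
  · simp only [hF, ContinuousLinearMap.comp_apply, ContinuousLinearMap.sub_apply, hPP, hRT]
    rw [hTp, map_neg, sub_self, map_zero]
  · have hRH : R (H (P ψ)) = -Pperp ψ := by
      rw [← hRT, hTapp, map_sub, map_smul, hRP, smul_zero, sub_zero]
    simp only [hQ, ContinuousLinearMap.comp_apply, ContinuousLinearMap.sub_apply, hPP, hRH]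
    rw [hperp]
    abel
end

section
/- Let λ ∈ ℂ be such that P⊥(H − λ)P⊥ is invertible on Ran P⊥, with inverse R⊥(λ). If φ ∈ Ran P satisfies F_P(H − λ)φ = 0, then the vector ψ := Q_P(λ)φ = φ − R⊥(λ)Hφ satisfies Hψ = λψ and Pψ = φ; in particular ψ ≠ 0 whenever φ ≠ 0. -/
/-!
With `ψ = φ - R H φ`, the vector `(H - λ)ψ` is shown to vanish by splitting it along `1 = P + P⊥`.
Since `R = P⊥ R P⊥` and `φ ∈ Ran P`, one has `R φ = 0` and `P R = 0`; hence `P(H - λ)ψ = F φ = 0`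
and `P ψ = φ`. On the other side, `P⊥(H - λ)ψ = P⊥ H φ - A R P⊥ H φ = 0`, because `R` inverts
`A = P⊥(H - λ)P⊥` on `Ran P⊥`.
-/

/-- Feshbach–Schur map, reconstruction of eigenvectors: if `φ ∈ Ran P` satisfies
`F_P(H-λ)φ = 0`, then `ψ := Q_P(λ)φ = φ - R⊥(λ)Hφ` satisfies `Hψ = λψ`, `Pψ = φ`,
and `ψ ≠ 0` whenever `φ ≠ 0`. -/
theorem feshbach_schur_eigenvector_backward
    {𝓗 : Type*} [NormedAddCommGroup 𝓗] [InnerProductSpace ℂ 𝓗] [CompleteSpace 𝓗]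
    (H P : 𝓗 →L[ℂ] 𝓗) (hP : P ∘L P = P)
    (Pperp : 𝓗 →L[ℂ] 𝓗) (hPperp : Pperp = 1 - P)
    (lam : ℂ) (R : 𝓗 →L[ℂ] 𝓗)
    (A : 𝓗 →L[ℂ] 𝓗) (hA : A = Pperp ∘L ((H - lam • 1) ∘L Pperp))
    (hR1 : R = Pperp ∘L (R ∘L Pperp))
    (hR2 : ∀ x ∈ Set.range ⇑Pperp, R (A x) = Pperp x)
    (hR3 : ∀ x ∈ Set.range ⇑Pperp, A (R x) = Pperp x)
    (F Q : 𝓗 →L[ℂ] 𝓗)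
    (hF : F = P ∘L (((H - lam • 1) - (H - lam • 1) ∘L (R ∘L (H - lam • 1))) ∘L P))
    (hQ : Q = P - R ∘L (H ∘L P))
    (φ : 𝓗) (hφ : φ ∈ Set.range ⇑P) (hFφ : F φ = 0) :
    Q φ = φ - R (H φ) ∧
    H (φ - R (H φ)) = lam • (φ - R (H φ)) ∧
    P (φ - R (H φ)) = φ ∧
    (φ ≠ 0 → φ - R (H φ) ≠ 0) := by
  have hPP : ∀ x, P (P x) = P x := fun x => congrArg (fun T : 𝓗 →L[ℂ] 𝓗 => T x) hP
  have hPφ : P φ = φ := by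
    obtain ⟨y, rfl⟩ := hφ
    exact hPP y
  have hperp : ∀ x, Pperp x = x - P x := fun x => by simp [hPperp]
  have hRx : ∀ x, R x = Pperp (R (Pperp x)) := fun x =>
    congrArg (fun T : 𝓗 →L[ℂ] 𝓗 => T x) hR1
  have hPR : ∀ x, P (R x) = 0 := fun x => by
    rw [hRx, hperp, map_sub, hPP, sub_self]
  have hperpR : ∀ x, Pperp (R x) = R x := fun x => by
    rw [hperp, hPR, sub_zero]
  have hperp2 : ∀ x, Pperp (Pperp x) = Pperp x := fun x => by
    simp [hperp, hPP]
  have hRperp : ∀ x, R (Pperp x) = R x := fun x => by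
    rw [hRx x, hperpR]
  have hperpφ : Pperp φ = 0 := by rw [hperp, hPφ, sub_self]
  have hRφ : R φ = 0 := by rw [← hRperp, hperpφ, map_zero]
  have hPψ : P (φ - R (H φ)) = φ := by rw [map_sub, hPφ, hPR, sub_zero]
  -- The `Ran P` component of `(H - λ)ψ` is `F φ`, because `R φ = 0`.
  have h1 : P (H (φ - R (H φ)) - lam • (φ - R (H φ))) = 0 := by
    rw [← hFφ, hF]
    simp [hPφ, hRφ, smul_sub]
    abel
  -- The `Ran P⊥` component vanishes, because `R` is a right inverse of `A` on `Ran P⊥`.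
  have h2 : Pperp (H (φ - R (H φ)) - lam • (φ - R (H φ))) = 0 := by
    have h := hR3 (Pperp (H φ)) ⟨_, rfl⟩
    rw [hRperp, hperp2, hA] at h
    simp only [ContinuousLinearMap.comp_apply, ContinuousLinearMap.sub_apply,
      ContinuousLinearMap.smul_apply, ContinuousLinearMap.one_apply, hperpR, map_sub,
      map_smul] at h
    simp only [map_sub, map_smul, hperpφ, hperpR, ← h]
    simp [smul_sub]
  refine ⟨by simp [hQ, hPφ], ?_, hPψ, fun hne h0 => hne ?_⟩
  · rw [hperp, h1, sub_zero] at h2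
    exact sub_eq_zero.mp h2
  · rw [← hPψ, h0, map_zero]
end

section
/- Suppose P⊥HP⊥ is invertible on Ran P⊥ with inverse R⊥. Then (1 − P*)H*(1 − P*) is invertible on Ran(1 − P*) with inverse (R⊥)*, and the adjoint of the Feshbach–Schur map satisfies (P(H − H R⊥ H)P)* = P*(H* − H*(R⊥)*H*)P*, i.e. F_P(H)* = F_{P*}(H*). In particular, if H is self-adjoint and P is an orthogonal projection, then F_P(H) = P(H − H R⊥ H)P is self-adjoint. -/
/-!
Write `Q = 1 - P`. Since `A = QHQ` and `R = QRQ` both absorb the idempotent `Q` on either side,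
invertibility of `A` on `Ran Q` with inverse `R` amounts to the operator identities
`R A = Q = A R`. Taking adjoints gives `A* R* = Q* = R* A*` with `A* = Q* H* Q*`, which is the
invertibility of `Q* H* Q*` on `Ran Q*`; the formula for `F_P(H)*` is the antimultiplicativity of
the adjoint. If `H` and `P` are self-adjoint then so is `A`, and uniqueness of the inverse,
`R* = R* Q = R* A R = Q R = R`, makes `F_P(H)` self-adjoint.
-/

open ContinuousLinearMap in
/-- Feshbach–Schur map and adjoints: if `P⊥HP⊥` is invertible on `Ran P⊥` with inverse `R⊥`,
then `(1-P*)H*(1-P*)` is invertible on `Ran (1-P*)` with inverse `(R⊥)*`, and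
`F_P(H)* = F_{P*}(H*)`.  In particular, if `H` is self-adjoint and `P` is an orthogonal
projection, then `F_P(H)` is self-adjoint. -/
theorem feshbach_schur_adjoint
    {𝓗 : Type*} [NormedAddCommGroup 𝓗] [InnerProductSpace ℂ 𝓗] [CompleteSpace 𝓗]
    (H P : 𝓗 →L[ℂ] 𝓗) (hP : P ∘L P = P)
    (Pperp : 𝓗 →L[ℂ] 𝓗) (hPperp : Pperp = 1 - P)
    (R : 𝓗 →L[ℂ] 𝓗)
    (A : 𝓗 →L[ℂ] 𝓗) (hA : A = Pperp ∘L (H ∘L Pperp))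
    (hR1 : R = Pperp ∘L (R ∘L Pperp))
    (hR2 : ∀ x ∈ Set.range ⇑Pperp, R (A x) = Pperp x)
    (hR3 : ∀ x ∈ Set.range ⇑Pperp, A (R x) = Pperp x) :
    (adjoint R = (1 - adjoint P) ∘L (adjoint R ∘L (1 - adjoint P))) ∧
    (∀ x ∈ Set.range ⇑(1 - adjoint P),
      adjoint R (((1 - adjoint P) ∘L (adjoint H ∘L (1 - adjoint P))) x) = (1 - adjoint P) x) ∧
    (∀ x ∈ Set.range ⇑(1 - adjoint P),
      ((1 - adjoint P) ∘L (adjoint H ∘L (1 - adjoint P))) (adjoint R x) = (1 - adjoint P) x) ∧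
    (adjoint (P ∘L ((H - H ∘L (R ∘L H)) ∘L P)) =
      adjoint P ∘L ((adjoint H - adjoint H ∘L (adjoint R ∘L adjoint H)) ∘L adjoint P)) ∧
    (IsSelfAdjoint H → IsSelfAdjoint P →
      IsSelfAdjoint (P ∘L ((H - H ∘L (R ∘L H)) ∘L P))) := by
  simp only [← star_eq_adjoint, ← mul_def] at *
  have hQ : Pperp * Pperp = Pperp := by
    rw [hPperp, mul_sub, sub_mul, sub_mul, hP]; simp
  have hQs : 1 - star P = star Pperp := by rw [hPperp, star_sub, star_one]
  have hAQ : A * Pperp = A := by rw [hA, mul_assoc, mul_assoc, hQ]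
  have hRQ : R * Pperp = R := by rw [hR1, mul_assoc, mul_assoc, hQ]
  have hQR : Pperp * R = R := by rw [hR1, ← mul_assoc, hQ]
  have hRA : R * A = Pperp := by
    have h : R * (A * Pperp) = Pperp * Pperp := by
      ext x; exact hR2 _ ⟨x, rfl⟩
    rwa [hAQ, hQ] at h
  have hAR : A * R = Pperp := by
    have h : A * (R * Pperp) = Pperp * Pperp := by
      ext x; exact hR3 _ ⟨x, rfl⟩
    rwa [hRQ, hQ] at h
  have hAs : star Pperp * (star H * star Pperp) = star A := by
    rw [hA, star_mul, star_mul, mul_assoc]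
  have hF : star (P * ((H - H * (R * H)) * P)) =
      star P * ((star H - star H * (star R * star H)) * star P) := by
    simp only [star_mul, star_sub, mul_assoc]
  rw [hQs, hAs]
  refine ⟨?_, fun x _ => ?_, fun x _ => ?_, hF, fun hH hPs => ?_⟩
  · conv_lhs => rw [hR1]
    simp only [star_mul, mul_assoc]
  · change (star R * star A) x = star Pperp x
    rw [← star_mul, hAR]
  · change (star A * star R) x = star Pperp x
    rw [← star_mul, hRA]
  · have hQsa : star Pperp = Pperp := by rw [← hQs, hPs.star_eq, hPperp]
    have hAsa : star A = A := by rw [← hAs, hQsa, hH.star_eq, hA]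
    have hRsA : star R * A = Pperp := by
      rw [← hQsa, ← hAR, star_mul, hAsa]
    have hRsQ : star R * Pperp = star R := by
      rw [← hQsa, ← star_mul, hQR]
    have hRsa : star R = R := by
      rw [← hRsQ, ← hAR, ← mul_assoc, hRsA, hQR]
    rw [IsSelfAdjoint, hF, hRsa, hH.star_eq, hPs.star_eq]
end

section
/- Let λ ∈ ℂ be such that P⊥(H − λ)P⊥ is invertible on Ran P⊥, with inverse R⊥(λ), and define the effective Hamiltonian H(λ) := F_P(H − λ) + λP, regarded as an operator on Ran P. Then λ is an eigenvalue of H (i.e. ker(H − λ) ≠ {0}) if and only if λ is an eigenvalue of the restriction of H(λ) to Ran P; equivalently, the eigenvalues of H at points λ where the map is defined are exactly the solutions of the fixed point equations ν(λ) = λ for eigenvalues ν(λ) of H(λ). -/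
/-!
Write `K = H - λ`. The map `φ ↦ φ - R K φ` carries `ker F ∩ Ran P` into `ker K`, with left inverse
`P` (as `P R = 0`); conversely, if `K ψ = 0`, then inverting the `P⊥`-component of this equation
gives `R K P ψ = -P⊥ ψ`, so `ψ = P ψ - R K P ψ` is recovered from `φ = P ψ` and
`F φ = P K ψ = 0`. On `Ran P`, the equation `H(λ) φ = λ φ` says exactly `F φ = 0`.
-/

/-- Effective Hamiltonian fixed-point characterization: with `H(λ) := F_P(H-λ) + λP` regarded
as an operator on `Ran P`, the number `λ` is an eigenvalue of `H` iff `λ` is an eigenvalue of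
the restriction of `H(λ)` to `Ran P`. -/
theorem feshbach_schur_effective_hamiltonian_eigen
    {𝓗 : Type*} [NormedAddCommGroup 𝓗] [InnerProductSpace ℂ 𝓗] [CompleteSpace 𝓗]
    (H P : 𝓗 →L[ℂ] 𝓗) (hP : P ∘L P = P)
    (Pperp : 𝓗 →L[ℂ] 𝓗) (hPperp : Pperp = 1 - P)
    (lam : ℂ) (R : 𝓗 →L[ℂ] 𝓗)
    (A : 𝓗 →L[ℂ] 𝓗) (hA : A = Pperp ∘L ((H - lam • 1) ∘L Pperp))
    (hR1 : R = Pperp ∘L (R ∘L Pperp))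
    (hR2 : ∀ x ∈ Set.range ⇑Pperp, R (A x) = Pperp x)
    (hR3 : ∀ x ∈ Set.range ⇑Pperp, A (R x) = Pperp x)
    (F Heff : 𝓗 →L[ℂ] 𝓗)
    (hF : F = P ∘L (((H - lam • 1) - (H - lam • 1) ∘L (R ∘L (H - lam • 1))) ∘L P))
    (hHeff : Heff = F + lam • P) :
    (∃ ψ : 𝓗, ψ ≠ 0 ∧ H ψ = lam • ψ) ↔
    (∃ φ ∈ Set.range ⇑P, φ ≠ 0 ∧ Heff φ = lam • φ) := by
  obtain ⟨K, hK⟩ : ∃ K : 𝓗 →L[ℂ] 𝓗, K = H - lam • 1 := ⟨_, rfl⟩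
  rw [← hK] at hA hF
  have hKx : ∀ x, K x = H x - lam • x := fun x => by simp [hK]
  have hPP : ∀ x, P (P x) = P x := fun x => DFunLike.congr_fun hP x
  have hQ : ∀ x, Pperp x = x - P x := fun x => by simp [hPperp]
  have hQQ : ∀ x, Pperp (Pperp x) = Pperp x := fun x => by simp [hQ, hPP]
  have hPQ : ∀ x, P (Pperp x) = 0 := fun x => by simp [hQ, hPP]
  have hRx : ∀ x, R x = Pperp (R (Pperp x)) := fun x => DFunLike.congr_fun hR1 x
  have hQR : ∀ x, Pperp (R x) = R x := fun x => by rw [hRx, hQQ]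
  have hRQ : ∀ x, R (Pperp x) = R x := fun x => by rw [hRx (Pperp x), hQQ, ← hRx]
  have hPR : ∀ x, P (R x) = 0 := fun x => by rw [← hQR, hPQ]
  have hAx : ∀ x, A x = Pperp (K (Pperp x)) := fun x => by rw [hA]; rfl
  have hRK : ∀ x, R (K (Pperp x)) = Pperp x := fun x => by
    have h := hR2 (Pperp x) ⟨x, rfl⟩
    rwa [hAx, hQQ, hRQ] at h
  have hKR : ∀ x, Pperp (K (R x)) = Pperp x := fun x => by
    have h := hR3 (Pperp x) ⟨x, rfl⟩
    rwa [hAx, hRQ, hQR, hQQ] at h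
  have hFx : ∀ x, F x = P (K (P x - R (K (P x)))) := fun x => by
    rw [hF, map_sub K]; rfl
  have hHx : ∀ x, Heff x = F x + lam • P x := fun x => by rw [hHeff]; rfl
  constructor
  · rintro ⟨ψ, hψ0, hψ⟩
    have hKψ : K ψ = 0 := by rw [hKx, hψ, sub_self]
    have hrec : P ψ - R (K (P ψ)) = ψ := by
      have h : P ψ = ψ - Pperp ψ := by rw [hQ]; abel
      have h2 : R (K (P ψ)) = -Pperp ψ := by
        rw [h, map_sub, map_sub, hKψ, hRK, map_zero, zero_sub]
      rw [h2, hQ]; abel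
    refine ⟨P ψ, ⟨ψ, rfl⟩, fun h0 => hψ0 ?_, ?_⟩
    · rw [← hrec, h0]; simp
    · rw [hHx, hFx, hPP, hrec, hKψ, map_zero, zero_add]
  · rintro ⟨_, ⟨x, rfl⟩, hφ0, hφ⟩
    rw [hHx, hFx, hPP, add_eq_right] at hφ
    refine ⟨P x - R (K (P x)), fun h0 => hφ0 ?_, ?_⟩
    · have h := congrArg P h0
      rwa [map_sub, hPR, hPP, sub_zero, map_zero] at h
    · have h : Pperp (K (P x - R (K (P x)))) = 0 := by
        rw [map_sub K, map_sub Pperp, hKR, sub_self]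
      rw [hQ, hφ, sub_zero, hKx] at h
      exact sub_eq_zero.mp h
end

section
/- For every real number m > 0 and every smooth compactly supported function f : ℝ³ → ℂ, one has (1/m)∫_{ℝ³} ‖∇f(x)‖² dx − ∫_{ℝ³} |f(x)|²/‖x‖ dx ≥ −m ∫_{ℝ³} |f(x)|² dx. (This is the quadratic-form version of the operator inequality −(1/m)Δ − 1/|x| ≥ −m, obtained from Hardy's inequality −Δ ≥ 1/(4|x|²).) -/
/-!
The vector field `F(x) = x / |x|` on `ℝ³` has `|F| ≤ 1` and `div F = 2 / |x|`. Since
`div (|f|² F)` integrates to zero,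
`∫ |f|² div F = -2 ∫ F · Re (f̄ ∇f) ≤ (1/m) ∫ |∇f|² + m ∫ |f|²`
by completing the square; this already bounds `2 ∫ |f|² / |x|`, so Hardy's inequality itself
is not needed.

To avoid the singularity at the origin, `F` is replaced by the smooth field `x / s` with
`s = √(|x|² + δ)`, `δ > 0`, whose divergence is `3 / s - |x|² / s³ ≥ 1 / s` (in fact `≥ 2 / s`).
Integrating the pointwise bound `divergence_lower_bound` gives `regularized_bound`, in which `1 / s`
stands in place of `1 / |x|`, and `δ → 0` by dominated convergence.
-/

open MeasureTheory

/-- `ℝ³` with its Euclidean norm. -/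
abbrev E3 := EuclideanSpace ℝ (Fin 3)

/-- The `i`-th partial derivative of the `i`-th component of `|f|² x / s`, `s = √(|x|² + δ)`. -/
theorem hasLineDerivAt_field_mul_normSq (δ : ℝ) (hδ : 0 < δ) (f : E3 → ℂ) (hf : Differentiable ℝ f) (i : Fin 3) (x : E3) :
    HasLineDerivAt ℝ (fun y : E3 => y i / √(‖y‖ ^ 2 + δ) * ‖f y‖ ^ 2)
      ((1 / √(‖x‖ ^ 2 + δ) - x i ^ 2 / √(‖x‖ ^ 2 + δ) ^ 3) * ‖f x‖ ^ 2
        + x i / √(‖x‖ ^ 2 + δ) * (2 * inner ℝ (f x) (fderiv ℝ f x (EuclideanSpace.single i 1))))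
      x (EuclideanSpace.single i 1) := by
  have hpos : 0 < ‖x‖ ^ 2 + δ := by positivity
  have h1 : HasFDerivAt (fun y : E3 => y i) (EuclideanSpace.proj i : E3 →L[ℝ] ℝ) x :=
    (EuclideanSpace.proj i : E3 →L[ℝ] ℝ).hasFDerivAt
  have h2 := (((hasFDerivAt_id x).norm_sq).add_const δ).sqrt hpos.ne'
  have h3 := (hf x).hasFDerivAt.norm_sq
  have hs : 0 < √(‖x‖ ^ 2 + δ) := Real.sqrt_pos.2 hpos
  have hd := (h1.hasLineDerivAt (EuclideanSpace.single i 1)).div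
    (h2.hasLineDerivAt (EuclideanSpace.single i 1)) (by simpa using hs.ne')
  refine (hd.mul (h3.hasLineDerivAt (EuclideanSpace.single i 1))).congr_deriv ?_
  simp [EuclideanSpace.inner_single_right]
  field_simp

/-- The partial derivative of `hasLineDerivAt_field_mul_normSq` is that of a compactly supported `C¹`
function, so it is integrable with integral zero. -/
theorem integral_lineDeriv_field_eq_zero (δ : ℝ) (hδ : 0 < δ) (f : E3 → ℂ) (hf : ContDiff ℝ 1 f)
    (hsupp : HasCompactSupport f) (i : Fin 3) :
    Integrable (fun x : E3 => (1 / √(‖x‖ ^ 2 + δ) - x i ^ 2 / √(‖x‖ ^ 2 + δ) ^ 3) * ‖f x‖ ^ 2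
        + x i / √(‖x‖ ^ 2 + δ) *
          (2 * inner ℝ (f x) (fderiv ℝ f x (EuclideanSpace.single i 1)))) ∧
    ∫ x : E3, ((1 / √(‖x‖ ^ 2 + δ) - x i ^ 2 / √(‖x‖ ^ 2 + δ) ^ 3) * ‖f x‖ ^ 2
        + x i / √(‖x‖ ^ 2 + δ) *
          (2 * inner ℝ (f x) (fderiv ℝ f x (EuclideanSpace.single i 1)))) = 0 := by
  have hpos : ∀ x : E3, √(‖x‖ ^ 2 + δ) ≠ 0 := fun x => (Real.sqrt_pos.2 (by positivity)).ne'
  have hpos3 : ∀ x : E3, √(‖x‖ ^ 2 + δ) ^ 3 ≠ 0 := fun x => pow_ne_zero _ (hpos x)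
  have hfc := hf.continuous
  have hdc : Continuous fun x => fderiv ℝ f x (EuclideanSpace.single i 1) :=
    (hf.continuous_fderiv one_ne_zero).clm_apply continuous_const
  have hz : ∀ x, x ∉ tsupport f → f x = 0 := fun x hx => image_eq_zero_of_notMem_tsupport hx
  have hI : Integrable (fun x : E3 =>
      (1 / √(‖x‖ ^ 2 + δ) - x i ^ 2 / √(‖x‖ ^ 2 + δ) ^ 3) * ‖f x‖ ^ 2
        + x i / √(‖x‖ ^ 2 + δ) *
          (2 * inner ℝ (f x) (fderiv ℝ f x (EuclideanSpace.single i 1)))) := by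
    refine Continuous.integrable_of_hasCompactSupport (by fun_prop (disch := assumption)) ?_
    exact HasCompactSupport.intro hsupp fun x hx => by simp [hz x hx]
  have hU : Integrable (fun y : E3 => y i / √(‖y‖ ^ 2 + δ) * ‖f y‖ ^ 2) := by
    refine Continuous.integrable_of_hasCompactSupport (by fun_prop (disch := assumption)) ?_
    exact HasCompactSupport.intro hsupp fun x hx => by simp [hz x hx]
  refine ⟨hI, ?_⟩
  -- Integration by parts against the constant function `1`.
  have := integral_bilinear_hasLineDerivAt_right_eq_neg_left_of_integrable (μ := volume)
    (f := fun _ : E3 => (1 : ℝ)) (f' := fun _ => 0) (B := ContinuousLinearMap.mul ℝ ℝ)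
    (v := EuclideanSpace.single i 1) (by simp) (by simpa using hI) (by simpa using hU)
    (fun x _ => by simpa [HasLineDerivAt] using hasDerivAt_const (0 : ℝ) (1 : ℝ))
    (fun x _ => hasLineDerivAt_field_mul_normSq δ hδ f (hf.differentiable one_ne_zero) i x)
  simpa using this

/-- Lower bound for the divergence of `|f|² x / s` at a point, with `z` and `w i` standing for the
values of `f` and its partial derivatives. -/
theorem divergence_lower_bound (m : ℝ) (hm : 0 < m) (δ : ℝ) (hδ : 0 < δ) (x : E3) (z : ℂ) (w : Fin 3 → ℂ) :
    ‖z‖ ^ 2 / √(‖x‖ ^ 2 + δ) - (1 / m) * ∑ i, ‖w i‖ ^ 2 - m * ‖z‖ ^ 2 ≤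
    ∑ i, ((1 / √(‖x‖ ^ 2 + δ) - x i ^ 2 / √(‖x‖ ^ 2 + δ) ^ 3) * ‖z‖ ^ 2
        + x i / √(‖x‖ ^ 2 + δ) * (2 * inner ℝ z (w i))) := by
  have hpos : 0 < ‖x‖ ^ 2 + δ := by positivity
  set s := √(‖x‖ ^ 2 + δ) with hs
  have hs0 : 0 < s := Real.sqrt_pos.2 hpos
  have hsq : s ^ 2 = ‖x‖ ^ 2 + δ := Real.sq_sqrt hpos.le
  have hx : ‖x‖ ^ 2 = ∑ i, x i ^ 2 := by simp [EuclideanSpace.norm_sq_eq]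
  have hle : ∑ i, x i ^ 2 ≤ s ^ 2 := by rw [← hx, hsq]; linarith
  have hc : ∀ i, -((1 / m) * ‖w i‖ ^ 2 + m * (x i ^ 2 / s ^ 2 * ‖z‖ ^ 2)) ≤
      x i / s * (2 * inner ℝ z (w i)) := by
    intro i
    -- Expand `(1/m) |w i + m (x i / s) z|² ≥ 0`.
    have h := sq_nonneg ‖w i + (m * (x i / s)) • z‖
    rw [norm_add_sq_real, inner_smul_right, norm_smul, mul_pow, Real.norm_eq_abs, sq_abs,
      real_inner_comm] at h
    have := mul_nonneg (one_div_pos.2 hm).le h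
    have e : 1 / m * (‖w i‖ ^ 2 + 2 * (m * (x i / s) * inner ℝ z (w i))
        + (m * (x i / s)) ^ 2 * ‖z‖ ^ 2)
      = (1 / m) * ‖w i‖ ^ 2 + m * (x i ^ 2 / s ^ 2 * ‖z‖ ^ 2) + x i / s * (2 * inner ℝ z (w i)) := by
      field_simp
      ring
    linarith
  have hq : (∑ i, x i ^ 2) / s ^ 2 ≤ 1 := (div_le_one (by positivity)).2 hle
  have h1 : (∑ i, x i ^ 2) / s ^ 3 ≤ 1 / s := by
    rw [div_le_div_iff₀ (by positivity) hs0]; nlinarith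
  have hsum := Finset.sum_le_sum fun i (_ : i ∈ Finset.univ) => hc i
  rw [Finset.sum_neg_distrib, Finset.sum_add_distrib, ← Finset.mul_sum, ← Finset.mul_sum,
    ← Finset.sum_mul, ← Finset.sum_div] at hsum
  rw [Finset.sum_add_distrib, ← Finset.sum_mul, Finset.sum_sub_distrib,
    ← Finset.sum_div Finset.univ (fun i => x i ^ 2)]
  simp only [Finset.sum_const, Finset.card_univ, Fintype.card_fin, nsmul_eq_mul]
  have hz := sq_nonneg ‖z‖
  have a1 : m * ((∑ i, x i ^ 2) / s ^ 2 * ‖z‖ ^ 2) ≤ m * ‖z‖ ^ 2 := by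
    gcongr; exact mul_le_of_le_one_left hz hq
  have a2 : 1 / s * ‖z‖ ^ 2 ≤ ((3 : ℕ) * (1 / s) - (∑ i, x i ^ 2) / s ^ 3) * ‖z‖ ^ 2 := by
    gcongr
    have : 0 < 1 / s := by positivity
    push_cast; linarith
  have a3 : ‖z‖ ^ 2 / s = 1 / s * ‖z‖ ^ 2 := by ring
  linarith

theorem regularized_bound (m : ℝ) (hm : 0 < m) (δ : ℝ) (hδ : 0 < δ) (f : E3 → ℂ) (hf : ContDiff ℝ 1 f)
    (hsupp : HasCompactSupport f) :
    ∫ x : E3, ‖f x‖ ^ 2 / √(‖x‖ ^ 2 + δ) ≤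
      (1 / m) * (∫ x : E3, ∑ i : Fin 3, ‖fderiv ℝ f x (EuclideanSpace.single i 1)‖ ^ 2)
        + m * ∫ x : E3, ‖f x‖ ^ 2 := by
  have hpos : ∀ x : E3, √(‖x‖ ^ 2 + δ) ≠ 0 := fun x => (Real.sqrt_pos.2 (by positivity)).ne'
  have hfc := hf.continuous
  have hdc : ∀ i : Fin 3, Continuous fun x => fderiv ℝ f x (EuclideanSpace.single i 1) := fun i =>
    (hf.continuous_fderiv one_ne_zero).clm_apply continuous_const
  have hz : ∀ x, x ∉ tsupport f → f x = 0 := fun x hx => image_eq_zero_of_notMem_tsupport hx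
  have hz' : ∀ x, x ∉ tsupport f → fderiv ℝ f x = 0 := fun x hx =>
    image_eq_zero_of_notMem_tsupport fun h => hx (tsupport_fderiv_subset ℝ h)
  have i1 : Integrable fun x : E3 => ‖f x‖ ^ 2 / √(‖x‖ ^ 2 + δ) := by
    refine Continuous.integrable_of_hasCompactSupport (by fun_prop (disch := assumption)) ?_
    exact HasCompactSupport.intro hsupp fun x hx => by simp [hz x hx]
  have i2 : Integrable fun x : E3 => ∑ i : Fin 3,
      ‖fderiv ℝ f x (EuclideanSpace.single i 1)‖ ^ 2 := by
    refine Continuous.integrable_of_hasCompactSupport (by fun_prop (disch := assumption)) ?_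
    exact HasCompactSupport.intro hsupp fun x hx => by simp [hz' x hx]
  have i3 : Integrable fun x : E3 => ‖f x‖ ^ 2 := by
    refine Continuous.integrable_of_hasCompactSupport (by fun_prop (disch := assumption)) ?_
    exact HasCompactSupport.intro hsupp fun x hx => by simp [hz x hx]
  have key := integral_mono ((i1.sub (i2.const_mul (1 / m))).sub (i3.const_mul m))
    (integrable_finsetSum _ fun i _ => (integral_lineDeriv_field_eq_zero δ hδ f hf hsupp i).1)
    (fun x => divergence_lower_bound m hm δ hδ x (f x) fun i => fderiv ℝ f x (EuclideanSpace.single i 1))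
  rw [integral_finsetSum _ fun i _ => (integral_lineDeriv_field_eq_zero δ hδ f hf hsupp i).1,
    Finset.sum_eq_zero fun i _ => (integral_lineDeriv_field_eq_zero δ hδ f hf hsupp i).2] at key
  simp only [Pi.sub_apply] at key
  have i12 : Integrable fun x : E3 => ‖f x‖ ^ 2 / √(‖x‖ ^ 2 + δ) -
      1 / m * ∑ i : Fin 3, ‖fderiv ℝ f x (EuclideanSpace.single i 1)‖ ^ 2 :=
    i1.sub (i2.const_mul (1 / m))
  rw [integral_sub i12 (i3.const_mul m), integral_sub i1 (i2.const_mul (1 / m)),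
    integral_const_mul, integral_const_mul] at key
  linarith

/-- Quadratic-form version of `-(1/m)Δ - 1/|x| ≥ -m` on ℝ³, obtained from Hardy's
inequality `-Δ ≥ 1/(4|x|²)`. -/
theorem hydrogen_form_lower_bound
    (m : ℝ) (hm : 0 < m)
    (f : EuclideanSpace ℝ (Fin 3) → ℂ)
    (hf : ContDiff ℝ (⊤ : ℕ∞) f) (hsupp : HasCompactSupport f) :
    -m * ∫ x : EuclideanSpace ℝ (Fin 3), ‖f x‖ ^ 2 ≤
      (1 / m) * (∫ x : EuclideanSpace ℝ (Fin 3),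
          ∑ i : Fin 3, ‖fderiv ℝ f x (EuclideanSpace.single i 1)‖ ^ 2)
        - ∫ x : EuclideanSpace ℝ (Fin 3), ‖f x‖ ^ 2 / ‖x‖ := by
  have hf1 : ContDiff ℝ 1 f := hf.of_le (by exact_mod_cast le_top)
  have hfc := hf1.continuous
  suffices h : ∫ x : EuclideanSpace ℝ (Fin 3), ‖f x‖ ^ 2 / ‖x‖ ≤
      (1 / m) * (∫ x : E3, ∑ i : Fin 3, ‖fderiv ℝ f x (EuclideanSpace.single i 1)‖ ^ 2)
        + m * ∫ x : E3, ‖f x‖ ^ 2 by linarith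
  by_cases hI : Integrable fun x : E3 => ‖f x‖ ^ 2 / ‖x‖
  swap
  -- Without integrability the Bochner integral is `0` by convention, and the bound is trivial.
  · rw [integral_undef hI]
    have h1 : 0 ≤ ∫ x : E3, ∑ i : Fin 3, ‖fderiv ℝ f x (EuclideanSpace.single i 1)‖ ^ 2 :=
      integral_nonneg fun x => by positivity
    have h2 : 0 ≤ ∫ x : E3, ‖f x‖ ^ 2 := integral_nonneg fun x => by positivity
    positivity
  -- At `x = 0` the regularized integrand may blow up while `‖f 0‖ ^ 2 / 0 = 0`.
  have hne : ∀ᵐ x : E3, x ≠ 0 := by simp [ae_iff]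
  have hlim := tendsto_integral_of_dominated_convergence (μ := volume)
    (F := fun (n : ℕ) (x : E3) => ‖f x‖ ^ 2 / √(‖x‖ ^ 2 + 1 / ((n : ℝ) + 1)))
    (f := fun x : E3 => ‖f x‖ ^ 2 / ‖x‖) (fun x => ‖f x‖ ^ 2 / ‖x‖)
    (fun n => by
      have hpos : ∀ x : E3, √(‖x‖ ^ 2 + 1 / ((n : ℝ) + 1)) ≠ 0 :=
        fun x => (Real.sqrt_pos.2 (by positivity)).ne'
      exact (by fun_prop (disch := assumption) : Continuous _).aestronglyMeasurable) hI
    (fun n => by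
      filter_upwards [hne] with x hx
      have hx' := norm_pos_iff.2 hx
      rw [Real.norm_of_nonneg (by positivity)]
      gcongr
      apply Real.le_sqrt_of_sq_le
      have : 0 < 1 / ((n : ℝ) + 1) := by positivity
      linarith)
    (by
      filter_upwards [hne] with x hx
      have hx' := norm_pos_iff.2 hx
      refine tendsto_const_nhds.div ?_ hx'.ne'
      have h := (tendsto_one_div_add_atTop_nhds_zero_nat (𝕜 := ℝ)).const_add (‖x‖ ^ 2)
      simpa [Real.sqrt_sq hx'.le] using h.sqrt)
  exact le_of_tendsto' hlim fun n => regularized_bound m hm _ (by positivity) f hf1 hsupp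
end

section
/- For every smooth compactly supported function f : ℝ³ × ℝ³ → ℂ, one has ∫_{ℝ³×ℝ³} |f(x,y)|²/‖x − y‖ dx dy ≤ (1/2)∫_{ℝ³×ℝ³} (‖∇_x f(x,y)‖² + ‖∇_y f(x,y)‖²) dx dy − ∫_{ℝ³×ℝ³} (1/‖x‖ + 1/‖y‖)|f(x,y)|² dx dy + 10∫_{ℝ³×ℝ³} |f(x,y)|² dx dy. (This is the quadratic-form version of the operator inequality 1/|x₁ − x₂| ≤ h_{x₁} + h_{x₂} + 10 with h_x := −(1/2)Δ_x − 1/|x|, used to verify the form-boundedness condition for Helium-type ions.) -/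
open MeasureTheory

/-!
The potential is bounded by completing a square. For a real `C¹` function `V` and a direction `v`,
expanding `0 ≤ ∫ ‖∂ᵥ f + V f‖²` and integrating the cross term `V ∂ᵥ‖f‖²` by parts gives
`∫ (∂ᵥ V - V²) ‖f‖² ≤ ∫ ‖∂ᵥ f‖²` (`integral_fderiv_sub_sq_mul_le`).

Let `F(z) = z / √(‖z‖² + ε)`, a smooth field on `ℝ³` with `‖F‖ ≤ 1` and
`div F ≥ 2 / √(‖z‖² + ε) ≥ 2 w(z)`, where `w(z) = ‖z‖ / (‖z‖² + ε)`. Using the components of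
`F(x) + F(x - y)` as `V` in the `x`-directions, those of `F(y) + F(y - x)` in the `y`-directions,
and adding the six inequalities bounds `∫ (w(x) + w(y) + 2 w(x - y)) ‖f‖²` by
`(1/2) ∫ ‖∇f‖² + 4 ∫ ‖f‖²`, uniformly in `ε`.
As `ε → 0`, `w(z) → 1 / ‖z‖` for every `z` (both sides vanish at `z = 0`, where `1 / 0 = 0`), and
Fatou's lemma gives the claim, together with the integrability of the Coulomb terms.
-/

/-- The space `ℝ³`. -/
local notation "R3" => EuclideanSpace ℝ (Fin 3)

/-- Expansion of `0 ≤ ∫ ‖∂ᵥ g + V g‖²`, the cross term being integrated by parts. -/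
lemma integral_fderiv_sub_sq_mul_le {g : R3 × R3 → ℂ} (hg : ContDiff ℝ 1 g)
    (hs : HasCompactSupport g) {V : R3 × R3 → ℝ} (hV : ContDiff ℝ 1 V) (v : R3 × R3) :
    Integrable (fun p => (fderiv ℝ V p v - V p ^ 2) * ‖g p‖ ^ 2) ∧
    Integrable (fun p => ‖fderiv ℝ g p v‖ ^ 2) ∧
    ∫ p, (fderiv ℝ V p v - V p ^ 2) * ‖g p‖ ^ 2 ≤ ∫ p, ‖fderiv ℝ g p v‖ ^ 2 := by
  have hu : ContDiff ℝ 1 (fun p => ‖g p‖ ^ 2) := hg.norm_sq ℝ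
  have hus : HasCompactSupport (fun p => ‖g p‖ ^ 2) :=
    hs.comp_left (g := fun z : ℂ => ‖z‖ ^ 2) (by simp)
  have hdV : Continuous (fun p => fderiv ℝ V p v) :=
    (hV.continuous_fderiv one_ne_zero).clm_apply continuous_const
  have hdg : Continuous (fun p => fderiv ℝ g p v) :=
    (hg.continuous_fderiv one_ne_zero).clm_apply continuous_const
  have hdu : Continuous (fun p => fderiv ℝ (fun p => ‖g p‖ ^ 2) p v) :=
    (hu.continuous_fderiv one_ne_zero).clm_apply continuous_const
  have hdus : HasCompactSupport (fun p => fderiv ℝ (fun p => ‖g p‖ ^ 2) p v) :=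
    hus.fderiv_apply ℝ v
  have hdgs : HasCompactSupport (fun p => ‖fderiv ℝ g p v‖ ^ 2) :=
    (hs.fderiv_apply ℝ v).comp_left (g := fun z : ℂ => ‖z‖ ^ 2) (by simp)
  have i1 : Integrable (fun p => fderiv ℝ V p v * ‖g p‖ ^ 2) :=
    (hdV.mul hu.continuous).integrable_of_hasCompactSupport hus.mul_left
  have i2 : Integrable (fun p => V p * fderiv ℝ (fun p => ‖g p‖ ^ 2) p v) :=
    (hV.continuous.mul hdu).integrable_of_hasCompactSupport hdus.mul_left
  have i3 : Integrable (fun p => V p * ‖g p‖ ^ 2) :=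
    (hV.continuous.mul hu.continuous).integrable_of_hasCompactSupport hus.mul_left
  have i4 : Integrable (fun p => V p ^ 2 * ‖g p‖ ^ 2) :=
    ((hV.continuous.pow 2).mul hu.continuous).integrable_of_hasCompactSupport hus.mul_left
  have i5 : Integrable (fun p => ‖fderiv ℝ g p v‖ ^ 2) :=
    (hdg.norm.pow 2).integrable_of_hasCompactSupport hdgs
  have : (volume : Measure (R3 × R3)).IsAddHaarMeasure :=
    Measure.prod.instIsAddHaarMeasure (volume : Measure R3) (volume : Measure R3)
  have ibp := integral_mul_fderiv_eq_neg_fderiv_mul_of_integrable i1 i2 i3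
    (fun x _ => hV.differentiable one_ne_zero x) (fun x _ => hu.differentiable one_ne_zero x)
  have i14 : Integrable (fun p => (fderiv ℝ V p v - V p ^ 2) * ‖g p‖ ^ 2) := by
    simp only [sub_mul]; exact i1.sub i4
  refine ⟨i14, i5, ?_⟩
  have key : 0 ≤ ∫ p, ((‖fderiv ℝ g p v‖ ^ 2 + V p * fderiv ℝ (fun p => ‖g p‖ ^ 2) p v)
      + V p ^ 2 * ‖g p‖ ^ 2) := by
    refine integral_nonneg fun p => ?_
    have h1 : fderiv ℝ (fun p => ‖g p‖ ^ 2) p v = 2 * inner ℝ (g p) (fderiv ℝ g p v) := by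
      have := ((hg.differentiable one_ne_zero p).hasFDerivAt.norm_sq).fderiv
      rw [this]
      simp only [smul_apply, ContinuousLinearMap.comp_apply,
        innerSL_apply_apply, nsmul_eq_mul, Nat.cast_ofNat]
    have h2 := norm_add_sq_real (fderiv ℝ g p v) (V p • g p)
    rw [inner_smul_right, norm_smul, mul_pow, Real.norm_eq_abs, sq_abs, real_inner_comm] at h2
    have h3 := sq_nonneg ‖fderiv ℝ g p v + V p • g p‖
    simp only [Pi.zero_apply]
    rw [h1]
    linarith
  rw [integral_add (by exact i5.add i2) i4, integral_add i5 i2, ibp] at key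
  have : ∫ p, (fderiv ℝ V p v - V p ^ 2) * ‖g p‖ ^ 2
      = (∫ p, fderiv ℝ V p v * ‖g p‖ ^ 2) - ∫ p, V p ^ 2 * ‖g p‖ ^ 2 := by
    rw [← integral_sub i1 i4]; simp only [sub_mul]
  linarith

/-- The `i`-th component of the regularized unit radial field `z / √(‖z‖² + ε)`. -/
noncomputable def radialField (ε : ℝ) (i : Fin 3) (z : R3) : ℝ :=
  z i * (Real.sqrt (‖z‖ ^ 2 + ε))⁻¹

lemma contDiff_radialField {ε : ℝ} (hε : 0 < ε) (i : Fin 3) : ContDiff ℝ 1 (radialField ε i) := by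
  have hpos : ∀ z : R3, 0 < ‖z‖ ^ 2 + ε := fun z => by positivity
  have h1 : ContDiff ℝ 1 (fun z : R3 => z i) := by fun_prop
  have h2 : ContDiff ℝ 1 (fun z : R3 => ‖z‖ ^ 2 + ε) := (contDiff_norm_sq ℝ).add contDiff_const
  exact h1.mul ((h2.sqrt fun z => (hpos z).ne').inv fun z => (Real.sqrt_pos.2 (hpos z)).ne')

lemma fderiv_radialField {ε : ℝ} (hε : 0 < ε) (i : Fin 3) (z : R3) :
    fderiv ℝ (radialField ε i) z (EuclideanSpace.single i 1)
      = (Real.sqrt (‖z‖ ^ 2 + ε))⁻¹ - z i ^ 2 * (Real.sqrt (‖z‖ ^ 2 + ε))⁻¹ ^ 3 := by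
  have hpos : 0 < ‖z‖ ^ 2 + ε := by positivity
  have hs := Real.sqrt_pos.2 hpos
  have h1 : HasFDerivAt (fun z : R3 => z i) (EuclideanSpace.proj i : R3 →L[ℝ] ℝ) z :=
    (EuclideanSpace.proj i : R3 →L[ℝ] ℝ).hasFDerivAt
  have h2 : HasFDerivAt (fun z : R3 => ‖z‖ ^ 2 + ε) (2 • innerSL ℝ z) z :=
    (hasStrictFDerivAt_norm_sq z).hasFDerivAt.add_const ε
  have h3 := h1.mul (((hasDerivAt_inv hs.ne').comp_hasFDerivAt z (h2.sqrt hpos.ne')))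
  have h4 : fderiv ℝ (radialField ε i) z = _ := h3.fderiv
  rw [h4]
  simp [EuclideanSpace.inner_single_right]
  field_simp
  ring

/-- Lower bound for the divergence of the radial field minus twice its squared length. The factor
`2` on the squared length allows for the splitting
`(a + b)² ≤ 2 a² + 2 b²` when two such fields are added. -/
lemma radialField_bound {ε : ℝ} (hε : 0 < ε) (z : R3) :
    2 * (‖z‖ / (‖z‖ ^ 2 + ε)) - 2 ≤
      ∑ i : Fin 3, (fderiv ℝ (radialField ε i) z (EuclideanSpace.single i 1)
        - 2 * radialField ε i z ^ 2) := by
  have hpos : 0 < ‖z‖ ^ 2 + ε := by positivity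
  have hs := Real.sqrt_pos.2 hpos
  have hsq := Real.sq_sqrt hpos.le
  have hn : ‖z‖ ^ 2 = z 0 ^ 2 + z 1 ^ 2 + z 2 ^ 2 := by
    rw [EuclideanSpace.norm_sq_eq, Fin.sum_univ_three]; simp
  simp only [fderiv_radialField hε, Fin.sum_univ_three, radialField]
  set s := Real.sqrt (‖z‖ ^ 2 + ε) with hsdef
  have hzs : ‖z‖ ≤ s := Real.le_sqrt_of_sq_le (by linarith)
  have e1 : ‖z‖ / (‖z‖ ^ 2 + ε) ≤ s⁻¹ := by
    rw [← hsq, div_le_iff₀ (by positivity), sq, inv_mul_cancel_left₀ hs.ne']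
    exact hzs
  have e2 : ‖z‖ ^ 2 * s⁻¹ ^ 2 ≤ 1 := by
    rw [inv_pow, ← div_eq_mul_inv, div_le_one (by positivity), hsq]; linarith
  have e3 : ‖z‖ ^ 2 * s⁻¹ ^ 3 ≤ s⁻¹ := by
    have := mul_le_mul_of_nonneg_right e2 (inv_pos.2 hs).le
    nlinarith
  rw [hn] at e2 e3
  nlinarith

/-- The inequality with the Coulomb potentials replaced by their regularizations, with a constant
independent of `ε`. -/
lemma regularized_bound_s19 {f : R3 × R3 → ℂ} (hf : ContDiff ℝ 1 f) (hs : HasCompactSupport f)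
    {ε : ℝ} (hε : 0 < ε) :
    ∫ p, (‖p.1‖ / (‖p.1‖ ^ 2 + ε) + ‖p.2‖ / (‖p.2‖ ^ 2 + ε)
        + ‖p.1 - p.2‖ / (‖p.1 - p.2‖ ^ 2 + ε)) * ‖f p‖ ^ 2 ≤
      (1 / 2) * (∫ p, ((∑ i : Fin 3, ‖fderiv ℝ f p (EuclideanSpace.single i 1, 0)‖ ^ 2) +
           ∑ i : Fin 3, ‖fderiv ℝ f p (0, EuclideanSpace.single i 1)‖ ^ 2))
      + 10 * ∫ p, ‖f p‖ ^ 2 := by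
  have hrc := fun i => contDiff_radialField hε i
  have hrd := fun i z => ((hrc i).differentiable one_ne_zero z).hasFDerivAt
  have c1 : ∀ i, ContDiff ℝ 1
      (fun p : R3 × R3 => radialField ε i p.1 + radialField ε i (p.1 - p.2)) := fun i =>
    ((hrc i).comp contDiff_fst).add ((hrc i).comp (contDiff_fst.sub contDiff_snd))
  have c2 : ∀ i, ContDiff ℝ 1
      (fun p : R3 × R3 => radialField ε i p.2 + radialField ε i (p.2 - p.1)) := fun i =>
    ((hrc i).comp contDiff_snd).add ((hrc i).comp (contDiff_snd.sub contDiff_fst))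
  have d1 : ∀ i (p : R3 × R3), fderiv ℝ
      (fun p : R3 × R3 => radialField ε i p.1 + radialField ε i (p.1 - p.2)) p
        (EuclideanSpace.single i 1, 0)
      = fderiv ℝ (radialField ε i) p.1 (EuclideanSpace.single i 1)
        + fderiv ℝ (radialField ε i) (p.1 - p.2) (EuclideanSpace.single i 1) := by
    intro i p
    have h := ((hrd i p.1).comp p hasFDerivAt_fst).add
      ((hrd i (p.1 - p.2)).comp p (hasFDerivAt_fst.sub hasFDerivAt_snd))
    have h' : fderiv ℝ
        (fun p : R3 × R3 => radialField ε i p.1 + radialField ε i (p.1 - p.2)) p = _ :=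
      h.fderiv
    rw [h']
    simp
  have d2 : ∀ i (p : R3 × R3), fderiv ℝ
      (fun p : R3 × R3 => radialField ε i p.2 + radialField ε i (p.2 - p.1)) p
        (0, EuclideanSpace.single i 1)
      = fderiv ℝ (radialField ε i) p.2 (EuclideanSpace.single i 1)
        + fderiv ℝ (radialField ε i) (p.2 - p.1) (EuclideanSpace.single i 1) := by
    intro i p
    have h := ((hrd i p.2).comp p hasFDerivAt_snd).add
      ((hrd i (p.2 - p.1)).comp p (hasFDerivAt_snd.sub hasFDerivAt_fst))
    have h' : fderiv ℝ
        (fun p : R3 × R3 => radialField ε i p.2 + radialField ε i (p.2 - p.1)) p = _ :=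
      h.fderiv
    rw [h']
    simp
  have A := fun i => integral_fderiv_sub_sq_mul_le hf hs (c1 i) (EuclideanSpace.single i 1, 0)
  have B := fun i => integral_fderiv_sub_sq_mul_le hf hs (c2 i) (0, EuclideanSpace.single i 1)
  simp only [d1] at A
  simp only [d2] at B
  have hu : Continuous (fun p => ‖f p‖ ^ 2) := hf.continuous.norm.pow 2
  have hus : HasCompactSupport (fun p => ‖f p‖ ^ 2) :=
    hs.comp_left (g := fun z : ℂ => ‖z‖ ^ 2) (by simp)
  have iu : Integrable (fun p => ‖f p‖ ^ 2) := hu.integrable_of_hasCompactSupport hus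
  have iA := integrable_finsetSum Finset.univ fun i _ => (A i).1
  have iB := integrable_finsetSum Finset.univ fun i _ => (B i).1
  have jA := integrable_finsetSum Finset.univ fun i _ => (A i).2.1
  have jB := integrable_finsetSum Finset.univ fun i _ => (B i).2.1
  have sA := Finset.sum_le_sum fun i (_ : i ∈ Finset.univ) => (A i).2.2
  have sB := Finset.sum_le_sum fun i (_ : i ∈ Finset.univ) => (B i).2.2
  rw [← integral_finsetSum _ fun i _ => (A i).1, ← integral_finsetSum _ fun i _ => (A i).2.1] at sA
  rw [← integral_finsetSum _ fun i _ => (B i).1, ← integral_finsetSum _ fun i _ => (B i).2.1] at sB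
  have hwc : Continuous (fun z : R3 => ‖z‖ / (‖z‖ ^ 2 + ε)) :=
    continuous_norm.div₀ (by fun_prop) fun z => by positivity
  have iw : Integrable (fun p : R3 × R3 => (‖p.1‖ / (‖p.1‖ ^ 2 + ε) + ‖p.2‖ / (‖p.2‖ ^ 2 + ε)
        + ‖p.1 - p.2‖ / (‖p.1 - p.2‖ ^ 2 + ε)) * ‖f p‖ ^ 2) := by
    refine Continuous.integrable_of_hasCompactSupport ?_ hus.mul_left
    exact (((hwc.comp continuous_fst).add (hwc.comp continuous_snd)).add
      (hwc.comp (continuous_fst.sub continuous_snd))).mul hu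
  rw [integral_add jA jB]
  have main := integral_mono (iw.const_mul 2) ((iA.add iB).add (iu.const_mul 8)) (fun p => by
    simp only [Pi.add_apply]
    rw [← Finset.sum_mul, ← Finset.sum_mul, ← add_mul, ← add_mul, ← mul_assoc]
    refine mul_le_mul_of_nonneg_right ?_ (by positivity)
    have b1 := radialField_bound hε p.1
    have b2 := radialField_bound hε p.2
    have b3 := radialField_bound hε (p.1 - p.2)
    have b4 := radialField_bound hε (p.2 - p.1)
    rw [norm_sub_rev p.2 p.1] at b4
    have hw : 0 ≤ ‖p.1 - p.2‖ / (‖p.1 - p.2‖ ^ 2 + ε) := by positivity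
    have sq2 : ∀ a b : ℝ, (a + b) ^ 2 ≤ 2 * a ^ 2 + 2 * b ^ 2 := fun a b => by
      nlinarith [sq_nonneg (a - b)]
    simp only [Fin.sum_univ_three] at b1 b2 b3 b4 ⊢
    have q1 := fun i => sq2 (radialField ε i p.1) (radialField ε i (p.1 - p.2))
    have q2 := fun i => sq2 (radialField ε i p.2) (radialField ε i (p.2 - p.1))
    linarith [q1 0, q1 1, q1 2, q2 0, q2 1, q2 2])
  rw [integral_add' (iA.add iB) (iu.const_mul 8), integral_add' iA iB, integral_const_mul,
    integral_const_mul] at main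
  have hu0 : 0 ≤ ∫ p, ‖f p‖ ^ 2 := integral_nonneg fun p => by positivity
  linarith

/-- The regularized potentials converge to `1 / r` everywhere, including at `r = 0`. -/
lemma tendsto_regularized (r : ℝ) :
    Filter.Tendsto (fun n : ℕ => r / (r ^ 2 + 1 / ((n : ℝ) + 1))) Filter.atTop (nhds (1 / r)) := by
  rcases eq_or_ne r 0 with rfl | hr
  · simp
  · have h := (tendsto_const_nhds (x := r ^ 2)).add (tendsto_one_div_add_atTop_nhds_zero_nat (𝕜 := ℝ))
    have := (tendsto_const_nhds (x := r)).div h (by simpa using hr)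
    have e : r / (r ^ 2 + 0) = 1 / r := by rw [add_zero]; field_simp
    rwa [e] at this

/-- Fatou's lemma for real-valued nonnegative functions with bounded integrals. -/
lemma integrable_and_integral_le_of_tendsto {G : ℕ → R3 × R3 → ℝ} {g : R3 × R3 → ℝ} {C : ℝ}
    (hG : ∀ n, Integrable (G n)) (hG0 : ∀ n p, 0 ≤ G n p) (hC : ∀ n, ∫ p, G n p ≤ C)
    (hlim : ∀ p, Filter.Tendsto (fun n => G n p) Filter.atTop (nhds (g p))) :
    Integrable g ∧ ∫ p, g p ≤ C := by
  have hg0 : ∀ p, 0 ≤ g p := fun p => ge_of_tendsto' (hlim p) fun n => hG0 n p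
  have hgm : AEStronglyMeasurable g volume :=
    aestronglyMeasurable_of_tendsto_ae Filter.atTop (fun n => (hG n).1)
      (Filter.Eventually.of_forall hlim)
  have hC0 : 0 ≤ C := (integral_nonneg (hG0 0)).trans (hC 0)
  have hle : ∫⁻ p, ENNReal.ofReal (g p) ≤ ENNReal.ofReal C := by
    calc ∫⁻ p, ENNReal.ofReal (g p)
        = ∫⁻ p, Filter.liminf (fun n => ENNReal.ofReal (G n p)) Filter.atTop := by
          refine lintegral_congr fun p => ?_
          exact ((ENNReal.tendsto_ofReal (hlim p)).liminf_eq).symm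
      _ ≤ Filter.liminf (fun n => ∫⁻ p, ENNReal.ofReal (G n p)) Filter.atTop :=
          lintegral_liminf_le' fun n => (hG n).1.aemeasurable.ennreal_ofReal
      _ ≤ ENNReal.ofReal C := by
          refine Filter.liminf_le_of_le (by isBoundedDefault) fun b hb => ?_
          obtain ⟨n, hn⟩ := hb.exists
          refine hn.trans ?_
          rw [← ofReal_integral_eq_lintegral_ofReal (hG n) (Filter.Eventually.of_forall (hG0 n))]
          exact ENNReal.ofReal_le_ofReal (hC n)
  refine ⟨⟨hgm, ?_⟩, ?_⟩
  · rw [hasFiniteIntegral_iff_ofReal (Filter.Eventually.of_forall hg0)]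
    exact hle.trans_lt ENNReal.ofReal_lt_top
  · rw [integral_eq_lintegral_of_nonneg_ae (Filter.Eventually.of_forall hg0) hgm]
    exact ENNReal.toReal_le_of_le_ofReal hC0 hle

/-- Quadratic-form version of the operator inequality (3.7):
`1/|x₁ - x₂| ≤ h_{x₁} + h_{x₂} + 10` with `h_x := -(1/2)Δ_x - 1/|x|`, on ℝ³ × ℝ³. -/
theorem coulomb_form_bound_hydrogen
    (f : EuclideanSpace ℝ (Fin 3) × EuclideanSpace ℝ (Fin 3) → ℂ)
    (hf : ContDiff ℝ (⊤ : ℕ∞) f) (hsupp : HasCompactSupport f) :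
    ∫ p : EuclideanSpace ℝ (Fin 3) × EuclideanSpace ℝ (Fin 3),
        ‖f p‖ ^ 2 / ‖p.1 - p.2‖ ≤
      (1 / 2) * (∫ p : EuclideanSpace ℝ (Fin 3) × EuclideanSpace ℝ (Fin 3),
          ((∑ i : Fin 3,
              ‖fderiv ℝ (fun x => f (x, p.2)) p.1 (EuclideanSpace.single i 1)‖ ^ 2) +
           ∑ i : Fin 3,
              ‖fderiv ℝ (fun y => f (p.1, y)) p.2 (EuclideanSpace.single i 1)‖ ^ 2))
      - (∫ p : EuclideanSpace ℝ (Fin 3) × EuclideanSpace ℝ (Fin 3),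
          (1 / ‖p.1‖ + 1 / ‖p.2‖) * ‖f p‖ ^ 2)
      + 10 * ∫ p : EuclideanSpace ℝ (Fin 3) × EuclideanSpace ℝ (Fin 3), ‖f p‖ ^ 2 := by
  have hf1 : ContDiff ℝ 1 f := hf.of_le (by exact_mod_cast le_top)
  have hfd := fun p => (hf1.differentiable one_ne_zero p).hasFDerivAt
  have s1 : ∀ (p : R3 × R3) (v : R3),
      fderiv ℝ (fun x => f (x, p.2)) p.1 v = fderiv ℝ f p (v, 0) := fun p v => by
    have h : HasFDerivAt (fun x => f (x, p.2)) _ p.1 :=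
      HasFDerivAt.comp p.1 (hfd (p.1, p.2)) (hasFDerivAt_prodMk_left p.1 p.2)
    rw [h.fderiv]; simp
  have s2 : ∀ (p : R3 × R3) (v : R3),
      fderiv ℝ (fun y => f (p.1, y)) p.2 v = fderiv ℝ f p (0, v) := fun p v => by
    have h : HasFDerivAt (fun y => f (p.1, y)) _ p.2 :=
      HasFDerivAt.comp p.2 (hfd (p.1, p.2)) (hasFDerivAt_prodMk_right p.1 p.2)
    rw [h.fderiv]; simp
  simp only [s1, s2]
  have hu : Continuous (fun p => ‖f p‖ ^ 2) := hf1.continuous.norm.pow 2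
  have hus : HasCompactSupport (fun p => ‖f p‖ ^ 2) :=
    hsupp.comp_left (g := fun z : ℂ => ‖z‖ ^ 2) (by simp)
  have hε : ∀ n : ℕ, (0 : ℝ) < 1 / ((n : ℝ) + 1) := fun n => by positivity
  obtain ⟨hi, hle⟩ := integrable_and_integral_le_of_tendsto
    (G := fun (n : ℕ) p => (‖p.1‖ / (‖p.1‖ ^ 2 + 1 / ((n : ℝ) + 1))
        + ‖p.2‖ / (‖p.2‖ ^ 2 + 1 / ((n : ℝ) + 1))
        + ‖p.1 - p.2‖ / (‖p.1 - p.2‖ ^ 2 + 1 / ((n : ℝ) + 1))) * ‖f p‖ ^ 2)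
    (g := fun p => (1 / ‖p.1‖ + 1 / ‖p.2‖ + 1 / ‖p.1 - p.2‖) * ‖f p‖ ^ 2)
    (fun n => by
      have hwc : Continuous (fun z : R3 => ‖z‖ / (‖z‖ ^ 2 + 1 / ((n : ℝ) + 1))) :=
        continuous_norm.div₀ (by fun_prop) fun z => by positivity
      refine Continuous.integrable_of_hasCompactSupport ?_ hus.mul_left
      exact (((hwc.comp continuous_fst).add (hwc.comp continuous_snd)).add
        (hwc.comp (continuous_fst.sub continuous_snd))).mul hu)
    (fun n p => by positivity)
    (fun n => regularized_bound_s19 hf1 hsupp (hε n))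
    (fun p => (((tendsto_regularized _).add (tendsto_regularized _)).add
      (tendsto_regularized _)).mul_const _)
  have i1 : Integrable (fun p : R3 × R3 => (1 / ‖p.1‖ + 1 / ‖p.2‖) * ‖f p‖ ^ 2) := by
    refine hi.mono' (by have := hu.measurable; fun_prop) (Filter.Eventually.of_forall fun p => ?_)
    rw [Real.norm_of_nonneg (by positivity)]
    refine mul_le_mul_of_nonneg_right ?_ (by positivity)
    exact le_add_of_nonneg_right (by positivity)
  have i2 : Integrable (fun p : R3 × R3 => ‖f p‖ ^ 2 / ‖p.1 - p.2‖) := by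
    refine (hi.sub i1).congr (Filter.Eventually.of_forall fun p => ?_)
    simp only [Pi.sub_apply]
    ring
  have hsum : ∫ p : R3 × R3, (1 / ‖p.1‖ + 1 / ‖p.2‖ + 1 / ‖p.1 - p.2‖) * ‖f p‖ ^ 2
      = (∫ p : R3 × R3, (1 / ‖p.1‖ + 1 / ‖p.2‖) * ‖f p‖ ^ 2)
        + ∫ p : R3 × R3, ‖f p‖ ^ 2 / ‖p.1 - p.2‖ := by
    rw [← integral_add i1 i2]
    exact integral_congr_ae (Filter.Eventually.of_forall fun p => by ring)
  linarith
end
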